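/- Let m ≥ 4. Every supporting size SDS that is 1/m-ex post efficient is the uniform lottery, i.e., its defining vector satisfies b_k = 1/(m(m−1)) for all k ∈ {0,…,n}. -/

import Mathlib

open Finset

noncomputable section

/-- A preference profile: each voter's strict linear order on the `m`
alternatives is encoded as a ranking permutation, where `R i x` is the rank of
alternative `x` for voter `i` (rank `0` = most preferred). Voter `i` strictly
prefers `x` to `y` iff `R i x < R i y`. -/
abbrev Profile (n m : ℕ) := Fin n → Equiv.Perm (Fin m)

/-- `F R x` is the probability that the social decision scheme `F` assigns to
alternative `x` at profile `R`; `IsSDS F` says every `F R` is a lottery. -/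
def IsSDS {n m : ℕ} (F : Profile n m → Fin m → ℝ) : Prop :=
  (∀ R x, 0 ≤ F R x) ∧ ∀ R, ∑ x, F R x = 1

/-- Stochastic-dominance preference of voter `i` (with preferences as in `R`):
lottery `p` is weakly preferred to lottery `q`. -/
def SDPref {n m : ℕ} (R : Profile n m) (i : Fin n) (p q : Fin m → ℝ) : Prop :=
  ∀ x : Fin m,
    ∑ y ∈ univ.filter (fun y => R i y < R i x), q y ≤
      ∑ y ∈ univ.filter (fun y => R i y < R i x), p y

/-- Strategyproofness: the truthful outcome is SD-preferred to any outcome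
obtainable by a unilateral deviation. -/
def Strategyproof {n m : ℕ} (F : Profile n m → Fin m → ℝ) : Prop :=
  ∀ (R R' : Profile n m) (i : Fin n),
    (∀ j, j ≠ i → R j = R' j) → SDPref R i (F R) (F R')

/-- Anonymity: permuting the voters does not change the outcome. -/
def Anonymous {n m : ℕ} (F : Profile n m → Fin m → ℝ) : Prop :=
  ∀ (π : Equiv.Perm (Fin n)) (R : Profile n m), F (fun i => R (π i)) = F R

/-- The profile obtained from `R` by relabeling the alternatives by `τ`
(in `relabel τ R`, alternative `τ x` gets the rank that `x` has in `R`). -/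
def relabel {n m : ℕ} (τ : Equiv.Perm (Fin m)) (R : Profile n m) : Profile n m :=
  fun i => τ.symm.trans (R i)

/-- Neutrality: relabeling the alternatives permutes the outcome accordingly. -/
def Neutral {n m : ℕ} (F : Profile n m → Fin m → ℝ) : Prop :=
  ∀ (τ : Equiv.Perm (Fin m)) (R : Profile n m) (x : Fin m),
    F (relabel τ R) (τ x) = F R x

/-- The supporting size `n_{xy}(R)`: the number of voters preferring `x` to `y`. -/
def suppSize {n m : ℕ} (R : Profile n m) (x y : Fin m) : ℕ :=
  (univ.filter (fun i => R i x < R i y)).card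

/-- `x` is the Condorcet winner of `R`. -/
def CondorcetWinner {n m : ℕ} (R : Profile n m) (x : Fin m) : Prop :=
  ∀ y, y ≠ x → suppSize R y x < suppSize R x y

/-- `α`-Condorcet-consistency. -/
def CondorcetConsistent {n m : ℕ} (F : Profile n m → Fin m → ℝ) (α : ℝ) : Prop :=
  ∀ R x, CondorcetWinner R x → α ≤ F R x

/-- `x` is Pareto-dominated in `R`. -/
def ParetoDominated {n m : ℕ} (R : Profile n m) (x : Fin m) : Prop :=
  ∃ y, ∀ i, R i y < R i x

/-- `β`-ex post efficiency. -/
def ExPostEff {n m : ℕ} (F : Profile n m → Fin m → ℝ) (β : ℝ) : Prop :=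
  ∀ R x, ParetoDominated R x → F R x ≤ β

/-- The probability that the dictatorial SDS of voter `i` assigns to `x`:
`1` if `x` is voter `i`'s most preferred alternative and `0` otherwise. -/
def dictProb {n m : ℕ} (R : Profile n m) (i : Fin n) (x : Fin m) : ℝ :=
  if ∀ y, R i x ≤ R i y then 1 else 0

/-- `d` is a random dictatorship. -/
def IsRandDict {n m : ℕ} (d : Profile n m → Fin m → ℝ) : Prop :=
  ∃ δ : Fin n → ℝ, (∀ i, 0 ≤ δ i) ∧ ∑ i, δ i = 1 ∧
    ∀ R x, d R x = ∑ i, δ i * dictProb R i x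

/-- `F` can be written as `γ d + (1 - γ) g` with `d` a random dictatorship and
`g` a strategyproof SDS. -/
def DecomposesAt {n m : ℕ} (F : Profile n m → Fin m → ℝ) (γ : ℝ) : Prop :=
  ∃ d g : Profile n m → Fin m → ℝ, IsRandDict d ∧ IsSDS g ∧ Strategyproof g ∧
    ∀ R x, F R x = γ * d R x + (1 - γ) * g R x

/-- `F` is `γ`-randomly dictatorial: `γ ∈ [0,1]` is the maximal value admitting
a decomposition `F = γ d + (1 - γ) g` as above. -/
def RandDictDegree {n m : ℕ} (F : Profile n m → Fin m → ℝ) (γ : ℝ) : Prop :=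
  0 ≤ γ ∧ γ ≤ 1 ∧ DecomposesAt F γ ∧
    ∀ γ', 0 ≤ γ' → γ' ≤ 1 → DecomposesAt F γ' → γ' ≤ γ

/-- The profile `R^{i:yx}` obtained from `R` by swapping `x` and `y` in voter
`i`'s preference relation (used when `x` is ranked directly above `y`). -/
def swapTop {n m : ℕ} (R : Profile n m) (i : Fin n) (x y : Fin m) : Profile n m :=
  Function.update R i ((R i).trans (Equiv.swap (R i x) (R i y)))

/-- The weight vector `b` defining the randomized Copeland rule:
`b k = 2/(m(m-1))` for `k > n/2`, `b k = 1/(m(m-1))` for `k = n/2`, `b k = 0`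
for `k < n/2`. -/
def copelandWeight (n m : ℕ) (k : ℕ) : ℝ :=
  if n < 2 * k then 2 / ((m : ℝ) * ((m : ℝ) - 1))
  else if 2 * k = n then 1 / ((m : ℝ) * ((m : ℝ) - 1))
  else 0

/-- The randomized Copeland rule `f_C(R, x) = ∑_{y ≠ x} b_{n_{xy}(R)}`. -/
def randCopeland (n m : ℕ) : Profile n m → Fin m → ℝ :=
  fun R x => ∑ y ∈ univ.filter (fun y => y ≠ x), copelandWeight n m (suppSize R x y)

/-- A point voting SDS, given by a scoring vector `a` (indexed by ranks
`0, …, m-1`, i.e. `a k` is the score of the `(k+1)`-st ranked alternative). -/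
structure PointVoting (n m : ℕ) where
  a : ℕ → ℝ
  mono : ∀ k l : ℕ, k ≤ l → l < m → a l ≤ a k
  nonneg : ∀ k : ℕ, k < m → 0 ≤ a k
  sum_eq : ∑ k ∈ Finset.range m, a k = 1 / (n : ℝ)

/-- The value of a point voting SDS. -/
def pvVal {n m : ℕ} (pv : PointVoting n m) : Profile n m → Fin m → ℝ :=
  fun R x => ∑ i, pv.a (R i x : ℕ)

/-- A supporting size SDS, given by a vector `b` indexed by supporting sizes
`0, …, n`. -/
structure SupportingSize (n m : ℕ) where
  b : ℕ → ℝ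
  mono : ∀ k l : ℕ, k ≤ l → l ≤ n → b k ≤ b l
  nonneg : ∀ k : ℕ, k ≤ n → 0 ≤ b k
  pair_eq : ∀ k : ℕ, k ≤ n → b k + b (n - k) = 2 / ((m : ℝ) * ((m : ℝ) - 1))

/-- The value of a supporting size SDS. -/
def ssVal {n m : ℕ} (S : SupportingSize n m) : Profile n m → Fin m → ℝ :=
  fun R x => ∑ y ∈ univ.filter (fun y => y ≠ x), S.b (suppSize R x y)

/-- A duple: a strategyproof SDS that puts positive probability on at most two
fixed alternatives. -/
def IsDuple {n m : ℕ} (g : Profile n m → Fin m → ℝ) : Prop :=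
  IsSDS g ∧ Strategyproof g ∧ ∃ x y : Fin m, ∀ R z, z ≠ x → z ≠ y → g R z = 0

/-- A unilateral: a strategyproof SDS that depends only on the preferences of a
single fixed voter. -/
def IsUnilateral {n m : ℕ} (g : Profile n m → Fin m → ℝ) : Prop :=
  IsSDS g ∧ Strategyproof g ∧
    ∃ i : Fin n, ∀ R R' : Profile n m, R i = R' i → g R = g R'

/-- `F` is a convex combination of SDSs satisfying the property `P`. -/
def MixOf {n m : ℕ} (P : (Profile n m → Fin m → ℝ) → Prop)
    (F : Profile n m → Fin m → ℝ) : Prop :=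
  ∃ (K : ℕ) (w : Fin K → ℝ) (g : Fin K → Profile n m → Fin m → ℝ),
    (∀ k, 0 ≤ w k) ∧ ∑ k, w k = 1 ∧ (∀ k, P (g k)) ∧
    ∀ R x, F R x = ∑ k, w k * g k R x

/-- The uniform random dictatorship. -/
def uniformRD (n m : ℕ) : Profile n m → Fin m → ℝ :=
  fun R x => (1 / (n : ℝ)) * ∑ i, dictProb R i x

/-- The uniform lottery. -/
def uniformLottery (n m : ℕ) : Profile n m → Fin m → ℝ :=
  fun _ _ => 1 / (m : ℝ)

/-!
If all voters submit the same ranking, the second-ranked alternative is Pareto-dominated and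
receives `b₀ + (m - 2) bₙ`. Since `b₀ + bₙ = 2c` with `c = 1 / (m (m - 1))`, bounding this by
`1 / m = (m - 1) c` gives `(m - 3) bₙ ≤ (m - 3) c`. For `m > 3` the largest weight is thus at most
the average `c` of `b₀` and `bₙ`, which leaves no room for monotone weights to vary.
-/

/-- The profile of `n` voters who all submit the ranking `σ`, so that `σ x` is the common rank of
`x`. On such profiles every supporting size is `0` or `n`. -/
def unanimousProfile (n : ℕ) {m : ℕ} (σ : Equiv.Perm (Fin m)) : Profile n m :=
  fun _ => σ

section UnanimousProfile

variable {n m : ℕ} (σ : Equiv.Perm (Fin m))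

lemma suppSize_unanimousProfile_of_lt {x y : Fin m} (hxy : σ x < σ y) :
    suppSize (unanimousProfile n σ) x y = n := by
  simp [suppSize, unanimousProfile, hxy]

lemma suppSize_unanimousProfile_of_gt {x y : Fin m} (hyx : σ y < σ x) :
    suppSize (unanimousProfile n σ) x y = 0 := by
  simp [suppSize, unanimousProfile, hyx.not_gt]

lemma paretoDominated_unanimousProfile {x : Fin m} (hx : 0 < (σ x : ℕ)) :
    ParetoDominated (unanimousProfile n σ) x := by
  refine ⟨σ.symm ⟨0, hx.trans (σ x).isLt⟩, fun _ => ?_⟩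
  rw [unanimousProfile, Equiv.apply_symm_apply]
  exact hx

lemma card_filter_rank_lt (x : Fin m) : #{y | σ y < σ x} = (σ x : ℕ) := by
  rw [← Fin.card_Iio]
  exact card_equiv σ (by simp)

lemma card_filter_lt_rank (x : Fin m) : #{y | σ x < σ y} = m - 1 - (σ x : ℕ) := by
  rw [← Fin.card_Ioi]
  exact card_equiv σ (by simp)

lemma ssVal_unanimousProfile (S : SupportingSize n m) (x : Fin m) :
    ssVal S (unanimousProfile n σ) x =
      (σ x : ℕ) * S.b 0 + (m - 1 - (σ x : ℕ) : ℕ) * S.b n := by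
  have ne_iff_rank_lt_or_gt (y : Fin m) : y ≠ x ↔ σ y < σ x ∨ σ x < σ y := by
    rw [lt_or_lt_iff_ne, σ.injective.ne_iff]
  have sum_above : ∑ y with σ y < σ x, S.b (suppSize (unanimousProfile n σ) x y) =
      (σ x : ℕ) * S.b 0 := by
    rw [sum_congr rfl fun y hy => by
      rw [suppSize_unanimousProfile_of_gt σ (mem_filter.1 hy).2]]
    rw [sum_const, card_filter_rank_lt, nsmul_eq_mul]
  have sum_below : ∑ y with σ x < σ y, S.b (suppSize (unanimousProfile n σ) x y) =
      (m - 1 - (σ x : ℕ) : ℕ) * S.b n := by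
    rw [sum_congr rfl fun y hy => by
      rw [suppSize_unanimousProfile_of_lt σ (mem_filter.1 hy).2]]
    rw [sum_const, card_filter_lt_rank, nsmul_eq_mul]
  simp only [ssVal, ne_iff_rank_lt_or_gt, filter_or]
  rw [sum_union (disjoint_filter.2 fun _ _ => lt_asymm), sum_above, sum_below]

end UnanimousProfile

namespace SupportingSize

variable {n m : ℕ} (S : SupportingSize n m)

lemma b_zero_add_b_last : S.b 0 + S.b n = 2 * (1 / ((m : ℝ) * ((m : ℝ) - 1))) := by
  simpa [div_eq_mul_inv] using S.pair_eq 0 n.zero_le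

variable {S}

lemma rank_mul_b_zero_add_mul_b_last_le_of_exPostEff {β : ℝ} (heff : ExPostEff (ssVal S) β)
    {r : ℕ} (hr : 0 < r) (hrm : r < m) :
    r * S.b 0 + (m - 1 - r : ℕ) * S.b n ≤ β := by
  simpa only [ssVal_unanimousProfile, Equiv.Perm.one_apply] using
    heff (unanimousProfile n 1) ⟨r, hrm⟩ (paretoDominated_unanimousProfile 1 hr)

lemma b_last_le_of_exPostEff (hm : 4 ≤ m) (heff : ExPostEff (ssVal S) (1 / (m : ℝ))) :
    S.b n ≤ 1 / ((m : ℝ) * ((m : ℝ) - 1)) := by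
  have second_ranked : S.b 0 + ((m : ℝ) - 2) * S.b n ≤ 1 / (m : ℝ) := by
    have h := rank_mul_b_zero_add_mul_b_last_le_of_exPostEff heff one_pos (by omega : 1 < m)
    rwa [Nat.sub_sub, Nat.cast_sub (by omega), Nat.cast_one, one_mul] at h
  have hm' : (4 : ℝ) ≤ m := mod_cast hm
  have one_div_eq : 1 / (m : ℝ) = ((m : ℝ) - 1) * (1 / ((m : ℝ) * ((m : ℝ) - 1))) := by
    have : (m : ℝ) - 1 ≠ 0 := by linarith
    field_simp
  refine le_of_mul_le_mul_left ?_ (by linarith : (0 : ℝ) < (m : ℝ) - 3)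
  linarith [S.b_zero_add_b_last]

lemma b_eq_of_b_last_le (hn : S.b n ≤ 1 / ((m : ℝ) * ((m : ℝ) - 1))) {k : ℕ} (hk : k ≤ n) :
    S.b k = 1 / ((m : ℝ) * ((m : ℝ) - 1)) := by
  have b_zero_le := S.mono 0 k k.zero_le hk
  have le_b_last := S.mono k n hk le_rfl
  have zero_add_last := S.b_zero_add_b_last
  apply le_antisymm <;> linarith

end SupportingSize

/-- For `m ≥ 4`, every supporting size SDS that is `1/m`-ex post
efficient is the uniform lottery, i.e. its defining vector is constant equal to
`1/(m(m-1))`. -/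
theorem supportingSize_uniform (n m : ℕ) (hm : 4 ≤ m) (S : SupportingSize n m)
    (heff : ExPostEff (ssVal S) (1 / (m : ℝ))) :
    ∀ k : ℕ, k ≤ n → S.b k = 1 / ((m : ℝ) * ((m : ℝ) - 1)) := by
  intro k hk
  exact SupportingSize.b_eq_of_b_last_le (SupportingSize.b_last_le_of_exPostEff hm heff) hk
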